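/- The function δ ↦ α_c^1(δ) is continuous and strictly decreasing on (0,∞), uniformly continuous on [δ₀,∞) for every δ₀>0, and lim_{δ→∞} α_c^1(δ)=0. -/

import Mathlib

open scoped BigOperators Classical ENNReal
open Filter Topology

noncomputable section
namespace ORRW

/-- Probability measures on a finite type `A`, topologized as a subset of `ℝ^A`. -/
abbrev ProbMeas (A : Type) [Fintype A] : Type :=
  {p : A → ℝ // (∀ a, 0 ≤ p a) ∧ ∑ a, p a = 1}

/-- Relative entropy `R(γ‖ρ)` between two finitely supported "rows", valued in `EReal`,
with `+∞` when absolute continuity fails. -/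
def relEnt {A : Type} [Fintype A] (γ ρ : A → ℝ) : EReal :=
  if ∀ a, ρ a = 0 → γ a = 0 then ((∑ a, γ a * Real.log (γ a / ρ a) : ℝ) : EReal)
  else (⊤ : EReal)

/-- `∫ R(q‖p) dν = Σ_a ν(a) · R(q(a,·)‖p(a,·))`. -/
def relEntInt {A : Type} [Fintype A] (ν : A → ℝ) (q p : A → A → ℝ) : EReal :=
  ∑ a, (ν a : EReal) * relEnt (q a) (p a)

/-- `ν` is an invariant measure of the kernel `q`. -/
def Invariant {A : Type} [Fintype A] (ν : A → ℝ) (q : A → A → ℝ) : Prop :=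
  ∀ y, ∑ x, ν x * q x y = ν y

/-- Extended-real logarithm: `⊥` at nonpositive arguments. -/
def elog (x : ℝ) : EReal := if x ≤ 0 then (⊥ : EReal) else ((Real.log x : ℝ) : EReal)

/-- Empirical measure of a finite trajectory `f : Fin (n+1) → A`. -/
def empMeas {A : Type} [Fintype A] [DecidableEq A] (n : ℕ) (f : Fin (n + 1) → A) :
    ProbMeas A :=
  ⟨fun a => ((Finset.univ.filter (fun i => f i = a)).card : ℝ) / (n + 1),
    fun a => by positivity, by
      have key : ∑ a : A, ((Finset.univ.filter (fun i => f i = a)).card) = n + 1 := by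
        have h := Finset.card_eq_sum_card_fiberwise
          (s := (Finset.univ : Finset (Fin (n + 1)))) (t := (Finset.univ : Finset A))
          (f := f) (fun i _ => Finset.mem_univ (f i))
        simpa using h.symm
      have key' : ∑ a : A, (((Finset.univ.filter (fun i => f i = a)).card : ℝ)) = (n : ℝ) + 1 := by
        have h2 := congrArg (fun m : ℕ => (m : ℝ)) key
        push_cast at h2
        simpa using h2
      rw [← Finset.sum_div, key', div_self (by positivity)]⟩

section Graph

variable {V : Type} [Fintype V] [DecidableEq V]

/-- Weight of an edge given the set `F` of already traversed edges. -/
def gw (δ : ℝ) (F : Finset (Sym2 V)) (e : Sym2 V) : ℝ := if e ∈ F then δ else 1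

/-- The transition kernel `p̂_F` on `V`. -/
def phat (G : SimpleGraph V) [DecidableRel G.Adj] (δ : ℝ) (F : Finset (Sym2 V))
    (x y : V) : ℝ :=
  if G.Adj x y then gw δ F s(x, y) / ∑ z ∈ G.neighborFinset x, gw δ F s(x, z) else 0

/-- Two edges are adjacent iff they share a vertex. -/
def edgeAdj (e e' : Sym2 V) : Prop := ∃ v, v ∈ e ∧ v ∈ e'

/-- `x` is a vertex of the edge set `F`. -/
def memVerts (F : Finset (Sym2 V)) (x : V) : Prop := ∃ e ∈ F, x ∈ e

/-- `𝒯_G`: stochastic matrices on `V` adapted to `G`. -/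
def TG (G : SimpleGraph V) : Set (V → V → ℝ) :=
  {q | (∀ x y, 0 ≤ q x y) ∧ (∀ x, ∑ y, q x y = 1) ∧ ∀ x y, q x y ≠ 0 → G.Adj x y}

/-- `𝒯(F)`: stochastic kernels from the vertex set of `F` to `V`, supported on `F`. -/
def TE (F : Finset (Sym2 V)) : Set (V → V → ℝ) :=
  {q | (∀ x y, 0 ≤ q x y) ∧ (∀ x, memVerts F x → ∑ y, q x y = 1) ∧
    ∀ x y, q x y ≠ 0 → s(x, y) ∈ F}

/-- `ℰ`: admissible increasing sequences of traversed edge sets. -/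
def seqE (G : SimpleGraph V) [DecidableRel G.Adj] (v₁ : V) :
    Set (Fin G.edgeFinset.card → Finset (Sym2 V)) :=
  {Es | (∀ k, Es k ⊆ G.edgeFinset) ∧ (∀ k, (Es k).card = (k : ℕ) + 1) ∧
    (∀ k l : Fin G.edgeFinset.card, (k : ℕ) + 1 = (l : ℕ) → Es k ⊂ Es l) ∧
    (∀ k : Fin G.edgeFinset.card, (k : ℕ) = 0 → ∃ e ∈ Es k, v₁ ∈ e) ∧
    (∀ k l : Fin G.edgeFinset.card, (k : ℕ) + 1 = (l : ℕ) →
      ∀ e ∈ Es l \ Es k, ∃ e' ∈ Es k, edgeAdj e e')}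

/-- The rate function `I_δ`. -/
def Ifun (G : SimpleGraph V) [DecidableRel G.Adj] (v₁ : V) (δ : ℝ) (ν : ProbMeas V) : EReal :=
  sInf { c : EReal |
    ∃ (νs : Fin G.edgeFinset.card → ProbMeas V) (r : Fin G.edgeFinset.card → ℝ)
      (Es : Fin G.edgeFinset.card → Finset (Sym2 V))
      (qs : Fin G.edgeFinset.card → V → V → ℝ),
      Es ∈ seqE G v₁ ∧ (∀ k, 0 ≤ r k) ∧ (∑ k, r k = 1) ∧
      (∀ k x, (νs k).1 x ≠ 0 → memVerts (Es k) x) ∧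
      (∀ x, ∑ k, r k * (νs k).1 x = ν.1 x) ∧
      (∀ k, qs k ∈ TE (Es k)) ∧ (∀ k, Invariant (νs k).1 (qs k)) ∧
      c = ∑ k, ((r k : ℝ) : EReal) * relEntInt (νs k).1 (qs k) (phat G δ (Es k)) }

/-- Edges traversed along a path, given as a list of consecutively visited vertices. -/
def pathEdges : List V → Finset (Sym2 V)
  | [] => ∅
  | [_] => ∅
  | x :: y :: t => insert s(x, y) (pathEdges (y :: t))

/-- Product of one-step ORRW transition probabilities along a trajectory,
the trajectory being listed in reverse chronological order. -/
def stepsProb (G : SimpleGraph V) [DecidableRel G.Adj] (δ : ℝ) : List V → ℝ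
  | [] => 1
  | [_] => 1
  | y :: x :: t => phat G δ (pathEdges (x :: t).reverse) x y * stepsProb G δ (x :: t)

/-- The law of `(X_0, …, X_n)` for the `δ`-ORRW started at `v₁`. -/
def trajProb (G : SimpleGraph V) [DecidableRel G.Adj] (δ : ℝ) (v₁ : V) (n : ℕ)
    (f : Fin (n + 1) → V) : ℝ :=
  if f 0 = v₁ then stepsProb G δ (List.ofFn f).reverse else 0

/-- `P_{v₁}(L_{n+1} ∈ C)`: the probability that the empirical measure of the first
`n+1` positions of the `δ`-ORRW lies in `C`. -/
def probEmp (G : SimpleGraph V) [DecidableRel G.Adj] (δ : ℝ) (v₁ : V) (n : ℕ)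
    (C : Set (ProbMeas V)) : ℝ :=
  ∑ f : Fin (n + 1) → V, if empMeas n f ∈ C then trajProb G δ v₁ n f else 0

/-- The family `𝒮` of edge sets of connected subgraphs having an edge at `v₁`. -/
def scrS (G : SimpleGraph V) [DecidableRel G.Adj] (v₁ : V) : Set (Finset (Sym2 V)) :=
  {F | F ⊆ G.edgeFinset ∧ (∃ e ∈ F, v₁ ∈ e) ∧
    ∀ x y : V, memVerts F x → memVerts F y →
      (SimpleGraph.fromEdgeSet (↑F : Set (Sym2 V))).Reachable x y}

/-- `𝒮₀` is a decreasing subset of `𝒮`. -/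
def DecreasingIn (G : SimpleGraph V) [DecidableRel G.Adj] (v₁ : V)
    (S0 : Set (Finset (Sym2 V))) : Prop :=
  ∀ F₁ F₂, F₁ ∈ scrS G v₁ → F₂ ∈ scrS G v₁ → F₁ ⊆ F₂ → F₂ ∈ S0 → F₁ ∈ S0

/-- `P_{v₁}(T_{𝒮₀} > n)`. -/
def probTgt (G : SimpleGraph V) [DecidableRel G.Adj] (δ : ℝ) (v₁ : V)
    (S0 : Set (Finset (Sym2 V))) (n : ℕ) : ℝ :=
  ∑ f : Fin (n + 1) → V,
    if ∀ k, 1 ≤ k → k ≤ n → pathEdges ((List.ofFn f).take (k + 1)) ∈ S0 then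
      trajProb G δ v₁ n f
    else 0

/-- `P_{v₁}(C_E > n)` for the edge cover time `C_E`. -/
def probCgt (G : SimpleGraph V) [DecidableRel G.Adj] (δ : ℝ) (v₁ : V) (n : ℕ) : ℝ :=
  ∑ f : Fin (n + 1) → V,
    if ¬ G.edgeFinset ⊆ pathEdges (List.ofFn f) then trajProb G δ v₁ n f else 0

/-- `E_{v₁}[exp (α T_{𝒮₀})]`, valued in `ℝ≥0∞`; the stopping time takes values in
`{1, 2, …} ∪ {∞}`. -/
def expT (G : SimpleGraph V) [DecidableRel G.Adj] (δ : ℝ) (v₁ : V)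
    (S0 : Set (Finset (Sym2 V))) (α : ℝ) : ℝ≥0∞ :=
  (∑' n : ℕ, ENNReal.ofReal
      (Real.exp (α * (n + 1)) * (probTgt G δ v₁ S0 n - probTgt G δ v₁ S0 (n + 1)))) +
    (if 0 < α then (⊤ : ℝ≥0∞) else if α = 0 then 1 else 0) *
      ENNReal.ofReal (⨅ n : ℕ, probTgt G δ v₁ S0 n)

/-- `E_{v₁}[exp (α C_E)]`, valued in `ℝ≥0∞`. -/
def expC (G : SimpleGraph V) [DecidableRel G.Adj] (δ : ℝ) (v₁ : V) (α : ℝ) : ℝ≥0∞ :=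
  (∑' n : ℕ, ENNReal.ofReal
      (Real.exp (α * (n + 1)) * (probCgt G δ v₁ n - probCgt G δ v₁ (n + 1)))) +
    (if 0 < α then (⊤ : ℝ≥0∞) else if α = 0 then 1 else 0) *
      ENNReal.ofReal (⨅ n : ℕ, probCgt G δ v₁ n)

/-- The critical exponent `α_c(δ)` attached to a family `𝒮₀` of edge sets. -/
def alphaC (G : SimpleGraph V) [DecidableRel G.Adj] (δ : ℝ)
    (S0 : Set (Finset (Sym2 V))) : EReal :=
  sInf { c : EReal | ∃ (ν : ProbMeas V) (F : Finset (Sym2 V)) (q : V → V → ℝ),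
    F ∈ S0 ∧ q ∈ TE F ∧ (∀ x, ν.1 x ≠ 0 → memVerts F x) ∧ Invariant ν.1 q ∧
    c = relEntInt ν.1 q (phat G δ F) }

/-- `α_c^1(δ)`: the critical exponent for the cover time. -/
def alphaC1 (G : SimpleGraph V) [DecidableRel G.Adj] (v₁ : V) (δ : ℝ) : EReal :=
  alphaC G δ (scrS G v₁ \ {G.edgeFinset})

end Graph

section Lifted

variable {V : Type} [Fintype V] [LinearOrder V]

/-- Smaller endpoint of an unordered pair. -/
def sym2lo (e : Sym2 V) : V := Sym2.lift ⟨fun a b => min a b, fun a b => min_comm a b⟩ e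

/-- Larger endpoint of an unordered pair. -/
def sym2hi (e : Sym2 V) : V := Sym2.lift ⟨fun a b => max a b, fun a b => max_comm a b⟩ e

/-- `V_S = E × {-1, 1}`: vertex set of the lifted directed graph `S`
(`true` plays the role of `+1`). -/
abbrev VSet (G : SimpleGraph V) [DecidableRel G.Adj] : Type :=
  {e : Sym2 V // e ∈ G.edgeFinset} × Bool

/-- Tail `z⁻` of an oriented edge. -/
def zm (G : SimpleGraph V) [DecidableRel G.Adj] (z : VSet G) : V :=
  if z.2 then sym2lo z.1.1 else sym2hi z.1.1

/-- Head `z⁺` of an oriented edge. -/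
def zp (G : SimpleGraph V) [DecidableRel G.Adj] (z : VSet G) : V :=
  if z.2 then sym2hi z.1.1 else sym2lo z.1.1

/-- The kernel `p_F` on the lifted directed graph `S`. -/
def pS (G : SimpleGraph V) [DecidableRel G.Adj] (δ : ℝ) (F : Finset (Sym2 V))
    (z₁ z₂ : VSet G) : ℝ :=
  if zp G z₁ = zm G z₂ then
    gw δ F z₂.1.1 / ∑ w : VSet G, (if zp G z₁ = zm G w then gw δ F w.1.1 else 0)
  else 0

/-- `𝒯_S`: stochastic matrices on `V_S` moving along orientations. -/
def TS (G : SimpleGraph V) [DecidableRel G.Adj] : Set (VSet G → VSet G → ℝ) :=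
  {q | (∀ z w, 0 ≤ q z w) ∧ (∀ z, ∑ w, q z w = 1) ∧ ∀ z w, q z w ≠ 0 → zp G z = zm G w}

/-- `𝒞(𝒮₀)`: probability measures on `V_S` whose first marginal is supported in
some member of `𝒮₀`. -/
def CC (G : SimpleGraph V) [DecidableRel G.Adj] (S0 : Set (Finset (Sym2 V))) :
    Set (ProbMeas (VSet G)) :=
  {μ | ∃ F ∈ S0, ∀ z : VSet G, μ.1 z ≠ 0 → z.1.1 ∈ F}

/-- `Λ_{δ,𝒮₀}`. -/
def Lam (G : SimpleGraph V) [DecidableRel G.Adj] (v₁ : V) (δ : ℝ)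
    (S0 : Set (Finset (Sym2 V))) (μ : ProbMeas (VSet G)) : EReal :=
  sInf { c : EReal |
    ∃ (μs : Fin G.edgeFinset.card → ProbMeas (VSet G)) (r : Fin G.edgeFinset.card → ℝ)
      (Es : Fin G.edgeFinset.card → Finset (Sym2 V))
      (qs : Fin G.edgeFinset.card → VSet G → VSet G → ℝ),
      Es ∈ seqE G v₁ ∧ (∀ k, 0 ≤ r k) ∧ (∀ k, Es k ∉ S0 → r k = 0) ∧ (∑ k, r k = 1) ∧
      (∀ k z, (μs k).1 z ≠ 0 → z.1.1 ∈ Es k) ∧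
      (∀ z, ∑ k, r k * (μs k).1 z = μ.1 z) ∧
      (∀ k, qs k ∈ TS G) ∧ (∀ k, Invariant (μs k).1 (qs k)) ∧
      c = ∑ k, ((r k : ℝ) : EReal) * relEntInt (μs k).1 (qs k) (pS G δ (Es k)) }

/-- `Λ^z_{δ,𝒮₀}`. -/
def LamZ (G : SimpleGraph V) [DecidableRel G.Adj] (v₁ : V) (δ : ℝ)
    (S0 : Set (Finset (Sym2 V))) (z : VSet G) (μ : ProbMeas (VSet G)) : EReal :=
  sInf { c : EReal |
    ∃ (μs : Fin G.edgeFinset.card → ProbMeas (VSet G)) (r : Fin G.edgeFinset.card → ℝ)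
      (Es : Fin G.edgeFinset.card → Finset (Sym2 V))
      (qs : Fin G.edgeFinset.card → VSet G → VSet G → ℝ),
      Es ∈ seqE G v₁ ∧ (∀ k : Fin G.edgeFinset.card, (k : ℕ) = 0 → Es k = {z.1.1}) ∧
      (∀ k, 0 ≤ r k) ∧ (∀ k, Es k ∉ S0 → r k = 0) ∧ (∑ k, r k = 1) ∧
      (∀ k w, (μs k).1 w ≠ 0 → w.1.1 ∈ Es k) ∧
      (∀ w, ∑ k, r k * (μs k).1 w = μ.1 w) ∧
      (∀ k, qs k ∈ TS G) ∧ (∀ k, Invariant (μs k).1 (qs k)) ∧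
      c = ∑ k, ((r k : ℝ) : EReal) * relEntInt (μs k).1 (qs k) (pS G δ (Es k)) }

/-- `Λ₁`: the Donsker–Varadhan functional for the simple random walk on `S`
(whose kernel is `pS` with `δ = 1`). -/
def Lam1 (G : SimpleGraph V) [DecidableRel G.Adj] (μ : ProbMeas (VSet G)) : EReal :=
  sInf { c : EReal | ∃ q ∈ TS G, Invariant μ.1 q ∧ c = relEntInt μ.1 q (pS G 1 ∅) }

/-- Boundary `∂F` of an edge set: edges of `F` adjacent to some edge outside `F`. -/
def bdry (G : SimpleGraph V) [DecidableRel G.Adj] (F : Finset (Sym2 V)) : Finset (Sym2 V) :=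
  F.filter fun e => ∃ e' ∈ G.edgeFinset \ F, edgeAdj e e'

/-- Out-degree `d(z)` of `z` in `S`. -/
def outDeg (G : SimpleGraph V) [DecidableRel G.Adj] (z : VSet G) : ℕ :=
  (Finset.univ.filter (fun w : VSet G => zp G z = zm G w)).card

/-- Number `k(z)` of out-neighbours of `z` lying in `F × {-1, 1}`. -/
def outDegIn (G : SimpleGraph V) [DecidableRel G.Adj] (F : Finset (Sym2 V))
    (z : VSet G) : ℕ :=
  (Finset.univ.filter (fun w : VSet G => zp G z = zm G w ∧ w.1.1 ∈ F)).card

/-- The law of `(Z_0, …, Z_n)` for the lifted `δ`-ORRW conditioned on `Z_0 = z`. -/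
def liftTraj (G : SimpleGraph V) [DecidableRel G.Adj] (δ : ℝ) (z : VSet G) (n : ℕ)
    (g : Fin (n + 1) → VSet G) : ℝ :=
  if g 0 = z then
    ∏ i : Fin n,
      pS G δ ((Finset.Iic i.castSucc).image (fun j => (g j).1.1))
        (g i.castSucc) (g i.succ)
  else 0

/-- The restricted logarithmic Laplace functional `W^{n+1}_{𝒮₀}(z)`. -/
def Wres (G : SimpleGraph V) [DecidableRel G.Adj] (δ : ℝ) (z : VSet G)
    (S0 : Set (Finset (Sym2 V))) (h : ProbMeas (VSet G) → ℝ) (n : ℕ) : EReal :=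
  if 0 < ∑ g : Fin (n + 1) → VSet G,
      (if empMeas n g ∈ CC G S0 then liftTraj G δ z n g else 0) then
    ((-((((n : ℝ) + 1))⁻¹ * Real.log (∑ g : Fin (n + 1) → VSet G,
      if empMeas n g ∈ CC G S0 then
        Real.exp (-((n : ℝ) + 1) * h (empMeas n g)) * liftTraj G δ z n g
      else 0)) : ℝ) : EReal)
  else (⊤ : EReal)

end Lifted

section Proof

set_option linter.unusedSectionVars false

variable {V : Type} [Fintype V] [DecidableEq V]

def totW (G : SimpleGraph V) [DecidableRel G.Adj] (δ : ℝ) (F : Finset (Sym2 V)) (x : V) : ℝ :=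
  ∑ z ∈ G.neighborFinset x, gw δ F s(x, z)

def costR (G : SimpleGraph V) [DecidableRel G.Adj] (δ : ℝ) (F : Finset (Sym2 V))
    (ν : V → ℝ) (q : V → V → ℝ) : ℝ :=
  ∑ x, ν x * ∑ y, q x y * Real.log (q x y / phat G δ F x y)

structure Adm (G : SimpleGraph V) [DecidableRel G.Adj] (v₁ : V) (F : Finset (Sym2 V))
    (ν : V → ℝ) (q : V → V → ℝ) : Prop where
  mem : F ∈ scrS G v₁
  ne : F ≠ G.edgeFinset
  nn : ∀ x, 0 ≤ ν x
  sum : ∑ x, ν x = 1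
  te : q ∈ TE F
  supp : ∀ x, ν x ≠ 0 → memVerts F x
  inv : Invariant ν q

lemma gw_pos {δ : ℝ} (hδ : 0 < δ) (F : Finset (Sym2 V)) (e : Sym2 V) : 0 < gw δ F e := by
  unfold gw; split_ifs <;> linarith

lemma totW_pos (G : SimpleGraph V) [DecidableRel G.Adj] {δ : ℝ} (hδ : 0 < δ)
    (F : Finset (Sym2 V)) {x y : V} (h : G.Adj x y) : 0 < totW G δ F x := by
  unfold totW
  apply Finset.sum_pos (fun z _ => gw_pos hδ F _)
  exact ⟨y, by simpa using h⟩

lemma phat_eq (G : SimpleGraph V) [DecidableRel G.Adj] (δ : ℝ)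
    {F : Finset (Sym2 V)} (hF : F ⊆ G.edgeFinset) {x y : V} (h : s(x, y) ∈ F) :
    phat G δ F x y = δ / totW G δ F x := by
  have : G.Adj x y := by simpa using hF h
  simp [phat, this, gw, h, totW]

lemma phat_nonneg (G : SimpleGraph V) [DecidableRel G.Adj] {δ : ℝ} (hδ : 0 < δ)
    (F : Finset (Sym2 V)) (x y : V) : 0 ≤ phat G δ F x y := by
  unfold phat
  split_ifs with h
  · exact div_nonneg (gw_pos hδ F _).le (Finset.sum_nonneg fun z _ => (gw_pos hδ F _).le)
  · exact le_rfl

lemma phat_sum (G : SimpleGraph V) [DecidableRel G.Adj] {δ : ℝ} (hδ : 0 < δ)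
    (F : Finset (Sym2 V)) {x y : V} (h : G.Adj x y) : ∑ z, phat G δ F x z = 1 := by
  have h0 := totW_pos G hδ F h
  have : ∀ z, phat G δ F x z = if z ∈ G.neighborFinset x then gw δ F s(x, z) / totW G δ F x else 0 := by
    intro z; simp [phat, totW]
  simp_rw [this]
  rw [← Finset.sum_filter, Finset.filter_mem_eq_inter, Finset.univ_inter, ← Finset.sum_div]
  exact div_self h0.ne'

lemma coe_sum_ereal {ι : Type*} (s : Finset ι) (f : ι → ℝ) :
    ((∑ i ∈ s, f i : ℝ) : EReal) = ∑ i ∈ s, (f i : EReal) := by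
  induction s using Finset.induction_on with
  | empty => simp
  | insert a s ha ih => rw [Finset.sum_insert ha, Finset.sum_insert ha, EReal.coe_add, ih]

lemma relEntInt_eq (G : SimpleGraph V) [DecidableRel G.Adj] {δ : ℝ} (hδ : 0 < δ)
    {F : Finset (Sym2 V)} (hF : F ⊆ G.edgeFinset) (ν : V → ℝ) {q : V → V → ℝ} (hq : q ∈ TE F) :
    relEntInt ν q (phat G δ F) = (costR G δ F ν q : EReal) := by
  unfold relEntInt costR
  rw [coe_sum_ereal]
  refine Finset.sum_congr rfl fun x _ => ?_
  rw [EReal.coe_mul, relEnt, if_pos]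
  intro y hy
  by_contra h
  have h1 := hq.2.2 x y h
  have h2 : G.Adj x y := by simpa using hF h1
  rw [phat_eq G δ hF h1] at hy
  have := div_pos hδ (totW_pos G hδ F h2)
  linarith

/-- Gibbs inequality. -/
lemma gibbs (q r p : V → ℝ) (hq : ∀ y, 0 ≤ q y) (hr : ∀ y, 0 ≤ r y)
    (hqr : ∀ y, q y ≠ 0 → 0 < r y ∧ 0 < p y) (hs : ∑ y, r y ≤ ∑ y, q y) :
    ∑ y, q y * Real.log (r y / p y) ≤ ∑ y, q y * Real.log (q y / p y) := by
  have : ∀ y, q y * Real.log (r y / p y) ≤ q y * Real.log (q y / p y) + (r y - q y) := by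
    intro y
    by_cases h : q y = 0
    · simp [h, hr y]
    obtain ⟨h1, h2⟩ := hqr y h
    have h0 : 0 < q y := lt_of_le_of_ne (hq y) (Ne.symm h)
    rw [Real.log_div h1.ne' h2.ne', Real.log_div h0.ne' h2.ne']
    have h3 := Real.log_le_sub_one_of_pos (div_pos h1 h0)
    rw [Real.log_div h1.ne' h0.ne'] at h3
    have h4 := mul_le_mul_of_nonneg_left h3 h0.le
    have h5 : q y * (r y / q y - 1) = r y - q y := by field_simp
    linarith
  have h := Finset.sum_le_sum fun y (_ : y ∈ Finset.univ) => this y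
  rw [Finset.sum_add_distrib, Finset.sum_sub_distrib] at h
  linarith

lemma adj_of_memVerts (G : SimpleGraph V) [DecidableRel G.Adj] {F : Finset (Sym2 V)}
    (hF : F ⊆ G.edgeFinset) {x : V} (h : memVerts F x) : ∃ y, s(x, y) ∈ F ∧ G.Adj x y := by
  obtain ⟨e, he, hx⟩ := h
  obtain ⟨y, rfl⟩ := hx
  exact ⟨y, he, by simpa using hF he⟩

lemma memVerts_left {F : Finset (Sym2 V)} {x y : V} (h : s(x, y) ∈ F) : memVerts F x :=
  ⟨_, h, by simp⟩

lemma memVerts_right {F : Finset (Sym2 V)} {x y : V} (h : s(x, y) ∈ F) : memVerts F y :=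
  ⟨_, h, by simp⟩

variable {G : SimpleGraph V} [DecidableRel G.Adj] {v₁ : V} {F : Finset (Sym2 V)}
  {ν : V → ℝ} {q : V → V → ℝ}

lemma Adm.cost_nonneg (h : Adm G v₁ F ν q) {δ : ℝ} (hδ : 0 < δ) : 0 ≤ costR G δ F ν q := by
  unfold costR
  refine Finset.sum_nonneg fun x _ => ?_
  by_cases hx : ν x = 0
  · simp [hx]
  obtain ⟨y, hy, hxy⟩ := adj_of_memVerts G h.mem.1 (h.supp x hx)
  refine mul_nonneg (h.nn x) ?_
  have hp : ∀ y, q x y ≠ 0 → 0 < phat G δ F x y := by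
    intro y hy
    rw [phat_eq G δ h.mem.1 (h.te.2.2 x y hy)]
    exact div_pos hδ (totW_pos G hδ F hxy)
  have := gibbs (q x) (phat G δ F x) (phat G δ F x) (h.te.1 x) (phat_nonneg G hδ F x)
    (fun y hy => ⟨hp y hy, hp y hy⟩) (by rw [phat_sum G hδ F hxy, h.te.2.1 x (h.supp x hx)])
  refine le_trans (le_of_eq ?_) this
  symm
  refine Finset.sum_eq_zero fun y _ => ?_
  by_cases hy : q x y = 0
  · simp [hy]
  · simp [div_self (hp y hy).ne']

lemma Adm.cost_diff (h : Adm G v₁ F ν q) {δ δ' : ℝ} (hδ : 0 < δ) (hδ' : 0 < δ') :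
    costR G δ F ν q - costR G δ' F ν q =
      ∑ x, ν x * (Real.log (totW G δ F x / δ) - Real.log (totW G δ' F x / δ')) := by
  unfold costR
  rw [← Finset.sum_sub_distrib]
  refine Finset.sum_congr rfl fun x _ => ?_
  by_cases hx : ν x = 0
  · simp [hx]
  obtain ⟨y, hy, hxy⟩ := adj_of_memVerts G h.mem.1 (h.supp x hx)
  have t := totW_pos G hδ F hxy
  have t' := totW_pos G hδ' F hxy
  rw [← mul_sub, ← Finset.sum_sub_distrib]
  congr 1
  rw [← one_mul (_ - _), ← h.te.2.1 x (h.supp x hx), Finset.sum_mul]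
  refine Finset.sum_congr rfl fun y _ => ?_
  by_cases hy : q x y = 0
  · simp [hy]
  have e := h.te.2.2 x y hy
  rw [phat_eq G δ h.mem.1 e, phat_eq G δ' h.mem.1 e, ← mul_sub]
  congr 1
  rw [Real.log_div hy (by positivity), Real.log_div hy (by positivity),
    Real.log_div (by positivity) (by positivity), Real.log_div (by positivity) (by positivity),
    Real.log_div (by positivity) (by positivity), Real.log_div (by positivity) (by positivity)]
  ring

lemma gw_div_le {δ δ' : ℝ} (hδ : 0 < δ) (hle : δ ≤ δ') (e : Sym2 V) :
    gw δ' F e / δ' ≤ gw δ F e / δ := by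
  have hδ' := hδ.trans_le hle
  unfold gw; split_ifs
  · rw [div_self hδ.ne', div_self hδ'.ne']
  · gcongr

lemma totW_div_le {δ δ' : ℝ} (hδ : 0 < δ) (hle : δ ≤ δ') (x : V) :
    totW G δ' F x / δ' ≤ totW G δ F x / δ := by
  unfold totW
  rw [Finset.sum_div, Finset.sum_div]
  exact Finset.sum_le_sum fun z _ => gw_div_le hδ hle _

lemma totW_div_lt {δ δ' : ℝ} (hδ : 0 < δ) (hlt : δ < δ') {x y : V} (hxy : G.Adj x y)
    (hy : s(x, y) ∉ F) :
    totW G δ' F x / δ' < totW G δ F x / δ := by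
  unfold totW
  rw [Finset.sum_div, Finset.sum_div]
  refine Finset.sum_lt_sum (fun z _ => gw_div_le hδ hlt.le _) ⟨y, by simpa using hxy, ?_⟩
  simp only [gw, if_neg hy]
  gcongr

lemma totW_mono {δ δ' : ℝ} (hle : δ ≤ δ') (x : V) :
    totW G δ F x ≤ totW G δ' F x := by
  unfold totW
  refine Finset.sum_le_sum fun z _ => ?_
  unfold gw; split_ifs
  · exact hle
  · exact le_rfl

lemma Adm.cost_anti (h : Adm G v₁ F ν q) {δ δ' : ℝ} (hδ : 0 < δ) (hle : δ ≤ δ') :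
    costR G δ' F ν q ≤ costR G δ F ν q := by
  have hδ' := hδ.trans_le hle
  rw [← sub_nonneg, h.cost_diff hδ hδ']
  refine Finset.sum_nonneg fun x _ => ?_
  by_cases hx : ν x = 0
  · simp [hx]
  obtain ⟨y, hy, hxy⟩ := adj_of_memVerts G h.mem.1 (h.supp x hx)
  have t' := totW_pos G hδ' F hxy
  refine mul_nonneg (h.nn x) (sub_nonneg.2 ?_)
  exact Real.log_le_log (by positivity) (totW_div_le hδ hle x)

lemma Adm.cost_lip (h : Adm G v₁ F ν q) {δ δ' : ℝ} (hδ : 0 < δ) (hle : δ ≤ δ') :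
    costR G δ F ν q - costR G δ' F ν q ≤ Real.log δ' - Real.log δ := by
  have hδ' := hδ.trans_le hle
  rw [h.cost_diff hδ hδ', ← one_mul (Real.log δ' - _), ← h.sum, Finset.sum_mul]
  refine Finset.sum_le_sum fun x _ => ?_
  by_cases hx : ν x = 0
  · simp [hx]
  obtain ⟨y, hy, hxy⟩ := adj_of_memVerts G h.mem.1 (h.supp x hx)
  have t := totW_pos G hδ F hxy
  have t' := totW_pos G hδ' F hxy
  refine mul_le_mul_of_nonneg_left ?_ (h.nn x)
  rw [Real.log_div t.ne' hδ.ne', Real.log_div t'.ne' hδ'.ne']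
  have := Real.log_le_log t (totW_mono (G := G) (F := F) hle x)
  linarith

lemma exists_bdry (hG : G.Connected) (hF : F ∈ scrS G v₁) (hne : F ≠ G.edgeFinset) :
    ∃ x y, memVerts F x ∧ G.Adj x y ∧ s(x, y) ∉ F := by
  by_contra hcon
  push Not at hcon
  apply hne
  refine Finset.Subset.antisymm hF.1 ?_
  have h1 : memVerts F v₁ := hF.2.1
  have hall : ∀ x, memVerts F x := by
    intro x
    have key : ∀ a b : V, G.Walk a b → memVerts F a → memVerts F b := by
      intro a b w
      induction w with
      | nil => exact id
      | cons hadj w ih => exact fun ha => ih (memVerts_right (hcon _ _ ha hadj))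
    obtain ⟨w⟩ := hG.preconnected v₁ x
    exact key _ _ w h1
  intro e he
  induction e with
  | h x y => exact hcon x y (hall x) (by simpa using he)

lemma Adm.cost_strict (hG : G.Connected) (h : Adm G v₁ F ν q) (hpos : ∀ x, memVerts F x → 0 < ν x)
    {δ δ' : ℝ} (hδ : 0 < δ) (hlt : δ < δ') :
    costR G δ' F ν q < costR G δ F ν q := by
  have hδ' := hδ.trans hlt
  rw [← sub_pos, h.cost_diff hδ hδ']
  obtain ⟨x, y, hx, hxy, hn⟩ := exists_bdry hG h.mem h.ne
  refine Finset.sum_pos' (fun x _ => ?_) ⟨x, Finset.mem_univ _, ?_⟩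
  · by_cases hx : ν x = 0
    · simp [hx]
    obtain ⟨y, hy, hxy⟩ := adj_of_memVerts G h.mem.1 (h.supp x hx)
    have t' := totW_pos G hδ' F hxy
    refine mul_nonneg (h.nn x) (sub_nonneg.2 ?_)
    exact Real.log_le_log (by positivity) (totW_div_le hδ hlt.le x)
  · have t' := totW_pos G hδ' F hxy
    exact mul_pos (hpos x hx) (sub_pos.2 (Real.log_lt_log (by positivity)
      (totW_div_lt hδ hlt hxy hn)))

lemma lin_zero {a b : ℝ} (h : ∀ t : ℝ, 0 ≤ b * (t * t) + (2 * a) * t + 0) : a = 0 := by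
  have := discrim_le_zero h
  unfold discrim at this
  nlinarith [sq_nonneg a]

lemma perron (p : V → ℝ) (hp : ∀ x, 0 < p x) (M : V → V → ℝ) (hM : ∀ x y, 0 ≤ M x y)
    (hsymm : ∀ x y, M x y = M y x) (hex : ∃ v : V → ℝ, 0 < ∑ x, ∑ y, M x y * (v x * v y)) :
    ∃ (l : ℝ) (u : V → ℝ), 0 < l ∧ (∀ x, 0 ≤ u x) ∧ ∑ x, p x * u x ^ 2 = 1 ∧
      ∀ x, ∑ y, M x y * u y = l * (p x * u x) := by
  set Q : (V → ℝ) → ℝ := fun v => ∑ x, ∑ y, M x y * (v x * v y) with hQ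
  set N : (V → ℝ) → ℝ := fun v => ∑ x, p x * v x ^ 2 with hN
  have Qc : Continuous Q := by rw [hQ]; fun_prop
  have Nc : Continuous N := by rw [hN]; fun_prop
  have Qabs : ∀ v, Q v ≤ Q (fun x => |v x|) := by
    intro v
    refine Finset.sum_le_sum fun x _ => Finset.sum_le_sum fun y _ => ?_
    refine mul_le_mul_of_nonneg_left ?_ (hM x y)
    rw [← abs_mul]; exact le_abs_self _
  have Nabs : ∀ v, N (fun x => |v x|) = N v := by
    intro v; simp [hN]
  have Qs : ∀ c v, Q (fun x => c * v x) = c ^ 2 * Q v := by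
    intro c v
    simp only [hQ, Finset.mul_sum]
    refine Finset.sum_congr rfl fun x _ => Finset.sum_congr rfl fun y _ => by ring
  have Ns : ∀ c v, N (fun x => c * v x) = c ^ 2 * N v := by
    intro c v
    simp only [hN, Finset.mul_sum]
    refine Finset.sum_congr rfl fun x _ => by ring
  have Nnn : ∀ v, 0 ≤ N v := fun v => Finset.sum_nonneg fun x _ => by
    have := hp x; positivity
  have N0 : ∀ v, N v = 0 → ∀ x, v x = 0 := by
    intro v hv x
    have := (Finset.sum_eq_zero_iff_of_nonneg (fun x _ => by
      have := hp x; positivity)).1 hv x (Finset.mem_univ x)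
    rcases mul_eq_zero.1 this with h | h
    · exact absurd h (hp x).ne'
    · exact pow_eq_zero_iff (two_ne_zero) |>.1 h
  let K : Set (V → ℝ) := {u | (∀ x, 0 ≤ u x) ∧ N u = 1}
  have hKc : IsCompact K := by
    refine IsCompact.of_isClosed_subset (isCompact_univ_pi
      (fun x => isCompact_Icc (a := (0:ℝ)) (b := 1 + 1 / p x))) ?_ ?_
    · refine IsClosed.inter ?_ (isClosed_eq Nc continuous_const)
      have : {u : V → ℝ | ∀ x, 0 ≤ u x} = ⋂ x, {u | 0 ≤ u x} := by ext; simp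
      change IsClosed {u : V → ℝ | ∀ x, 0 ≤ u x}
      rw [this]
      exact isClosed_iInter fun x => isClosed_le continuous_const (continuous_apply x)
    · intro u hu x _
      refine ⟨hu.1 x, ?_⟩
      have h1 : p x * u x ^ 2 ≤ 1 := by
        rw [← hu.2]
        exact Finset.single_le_sum (f := fun x => p x * u x ^ 2)
          (fun y _ => by have := hp y; positivity) (Finset.mem_univ x)
      have h2 : u x ^ 2 ≤ 1 / p x := by
        rw [le_div_iff₀ (hp x)]; linarith
      nlinarith [sq_nonneg (u x - 1), hu.1 x]
  have hnorm : ∀ v, N v ≠ 0 → (fun x => (Real.sqrt (N v))⁻¹ * |v x|) ∈ K := by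
    intro v hv
    refine ⟨fun x => by positivity, ?_⟩
    rw [Ns _ (fun x => |v x|), Nabs, inv_pow, Real.sq_sqrt (Nnn v), inv_mul_cancel₀ hv]
  obtain ⟨v, hv⟩ := hex
  have hvN : N v ≠ 0 := by
    intro h
    have h0 := N0 v h
    simp [h0] at hv
  obtain ⟨u, huK, hmax⟩ := hKc.exists_isMaxOn ⟨_, hnorm v hvN⟩ Qc.continuousOn
  have hle : ∀ w, Q w ≤ Q u * N w := by
    intro w
    by_cases hw : N w = 0
    · have h0 := N0 w hw
      simp [hw, hQ, h0]
    · have h1 : Q _ ≤ Q u := hmax (hnorm w hw)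
      rw [Qs _ (fun x => |w x|), inv_pow, Real.sq_sqrt (Nnn w)] at h1
      have hpos : 0 < N w := lt_of_le_of_ne (Nnn w) (Ne.symm hw)
      rw [inv_mul_le_iff₀ hpos] at h1
      linarith [Qabs w]
  have hl : 0 < Q u := by
    have h1 := hle v
    have h2 : 0 < Q v := hv
    have h3 := Nnn v
    by_contra h
    nlinarith
  refine ⟨Q u, u, hl, huK.1, huK.2, fun x => ?_⟩
  set C := ∑ y, M x y * u y with hC
  have expN : ∀ t : ℝ, N (fun z => u z + t * (if z = x then 1 else 0)) =
      N u + 2 * t * (p x * u x) + t ^ 2 * p x := by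
    intro t
    have : ∀ z, p z * (u z + t * (if z = x then 1 else 0)) ^ 2 =
        p z * u z ^ 2 + (if z = x then 2 * t * (p z * u z) + t ^ 2 * p z else 0) := by
      intro z; split_ifs <;> ring
    simp only [hN, this, Finset.sum_add_distrib, Finset.sum_ite_eq', Finset.mem_univ, if_true]
    ring
  have expQ : ∀ t : ℝ, Q (fun z => u z + t * (if z = x then 1 else 0)) =
      Q u + 2 * t * C + t ^ 2 * M x x := by
    intro t
    have : ∀ z y, M z y * ((u z + t * (if z = x then 1 else 0)) * (u y + t * (if y = x then 1 else 0))) =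
        M z y * (u z * u y) + ((if z = x then t * (M z y * u y) else 0) +
          ((if y = x then t * (M z y * u z) else 0) +
            (if y = x then (if z = x then t ^ 2 * M z y else 0) else 0))) := by
      intro z y; split_ifs <;> ring
    simp only [hQ, this, Finset.sum_add_distrib, Finset.sum_ite_eq', Finset.mem_univ, if_true]
    have h1 : ∑ z, ∑ y, (if z = x then t * (M z y * u y) else 0) = t * C := by
      rw [Finset.sum_comm]
      simp only [Finset.sum_ite_eq', Finset.mem_univ, if_true, hC, Finset.mul_sum]
    have h2 : ∑ z, t * (M z x * u z) = t * C := by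
      simp only [hC, Finset.mul_sum]
      exact Finset.sum_congr rfl fun z _ => by rw [hsymm]
    rw [h1, h2]
    ring
  have key : Q u * (p x * u x) - C = 0 := by
    apply lin_zero (b := Q u * p x - M x x)
    intro t
    have h := hle (fun z => u z + t * (if z = x then 1 else 0))
    rw [expN, expQ, huK.2] at h
    nlinarith
  linarith

lemma Adm.log_sum (h : Adm G v₁ F ν q) (u : V → ℝ) (hu : ∀ x, memVerts F x → 0 < u x)
    {l : ℝ} (hl : 0 < l) :
    ∑ x, ν x * ∑ y, q x y * Real.log (u y / (l * u x)) = - Real.log l := by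
  have h1 : ∀ x, ν x * ∑ y, q x y * Real.log (u y / (l * u x)) =
      (∑ y, (ν x * q x y) * Real.log (u y)) - ν x * (Real.log (u x)) - ν x * Real.log l := by
    intro x
    by_cases hx : ν x = 0
    · simp [hx]
    have h2 : ∀ y, q x y * Real.log (u y / (l * u x)) =
        q x y * Real.log (u y) - q x y * (Real.log l + Real.log (u x)) := by
      intro y
      by_cases hy : q x y = 0
      · simp [hy]
      have e := h.te.2.2 x y hy
      have ux := hu x (memVerts_left e)
      have uy := hu y (memVerts_right e)
      rw [Real.log_div uy.ne' (by positivity), Real.log_mul hl.ne' ux.ne']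
      ring
    simp only [h2, Finset.sum_sub_distrib]
    rw [← Finset.sum_mul, h.te.2.1 x (h.supp x hx), mul_sub, Finset.mul_sum]
    simp only [mul_assoc]
    ring
  simp only [h1, Finset.sum_sub_distrib]
  rw [Finset.sum_comm]
  simp only [← Finset.sum_mul]
  have := h.inv
  unfold Invariant at this
  simp only [this, h.sum]
  ring

lemma exists_min (hadj : ∀ x, ∃ y, G.Adj x y) (hF : F ∈ scrS G v₁) (hne : F ≠ G.edgeFinset)
    {δ : ℝ} (hδ : 0 < δ) :
    ∃ (ν : V → ℝ) (q : V → V → ℝ), Adm G v₁ F ν q ∧ (∀ x, memVerts F x → 0 < ν x) ∧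
      ∀ ν' q', Adm G v₁ F ν' q' → costR G δ F ν q ≤ costR G δ F ν' q' := by
  have hp : ∀ x, 0 < totW G δ F x := fun x => by
    obtain ⟨y, hy⟩ := hadj x
    exact totW_pos G hδ F hy
  set M : V → V → ℝ := fun x y => if s(x, y) ∈ F then δ else 0 with hMdef
  have hM : ∀ x y, 0 ≤ M x y := by intro x y; simp only [hMdef]; split_ifs <;> linarith
  have hMs : ∀ x y, M x y = M y x := by intro x y; simp only [hMdef, Sym2.eq_swap]
  obtain ⟨l, u, hl, hu0, hu1, heig⟩ := perron (totW G δ F) hp M hM hMs (by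
    obtain ⟨y, hy, _⟩ := adj_of_memVerts G hF.1 (show memVerts F v₁ from hF.2.1)
    refine ⟨fun _ => 1, ?_⟩
    refine Finset.sum_pos' (fun x _ => Finset.sum_nonneg fun y _ => by simpa using hM x y)
      ⟨v₁, Finset.mem_univ _, Finset.sum_pos' (fun y _ => by simpa using hM v₁ y)
        ⟨y, Finset.mem_univ _, ?_⟩⟩
    simp [hMdef, hy, hδ])
  -- positivity
  have hstep : ∀ x y, s(x, y) ∈ F → 0 < u x → 0 < u y := by
    intro x y hxy hx
    have h1 := heig y
    have h2 : 0 < ∑ z, M y z * u z := by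
      refine Finset.sum_pos' (fun z _ => mul_nonneg (hM y z) (hu0 z)) ⟨x, Finset.mem_univ _, ?_⟩
      have : s(y, x) ∈ F := by rwa [Sym2.eq_swap]
      simp only [hMdef, this, if_true]; positivity
    rw [h1] at h2
    by_contra hn
    have : u y = 0 := le_antisymm (not_lt.1 hn) (hu0 y)
    simp [this] at h2
  obtain ⟨x0, hx0⟩ : ∃ x, 0 < u x := by
    by_contra hn
    push Not at hn
    have : ∀ x, u x = 0 := fun x => le_antisymm (hn x) (hu0 x)
    simp [this] at hu1
  have hx0m : memVerts F x0 := by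
    by_contra hn
    have h1 := heig x0
    have h2 : ∀ y, M x0 y = 0 := fun y => by
      simp only [hMdef]; rw [if_neg]; exact fun hy => hn (memVerts_left hy)
    simp only [h2, zero_mul, Finset.sum_const_zero] at h1
    have := mul_pos hl (mul_pos (hp x0) hx0)
    linarith
  have hu : ∀ x, memVerts F x → 0 < u x := by
    intro x hx
    obtain ⟨w⟩ := hF.2.2 x0 x hx0m hx
    have key : ∀ a b : V, (SimpleGraph.fromEdgeSet (↑F : Set (Sym2 V))).Walk a b →
        0 < u a → 0 < u b := by
      intro a b w
      induction w with
      | nil => exact id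
      | cons hadj w ih =>
        intro ha
        rw [SimpleGraph.fromEdgeSet_adj] at hadj
        exact ih (hstep _ _ (by simpa using hadj.1) ha)
    exact key _ _ w hx0
  have hu' : ∀ x, ¬ memVerts F x → u x = 0 := by
    intro x hn
    have h1 := heig x
    have h2 : ∀ y, M x y = 0 := fun y => by
      simp only [hMdef]; rw [if_neg]; exact fun hy => hn (memVerts_left hy)
    simp only [h2, zero_mul, Finset.sum_const_zero] at h1
    by_contra h
    have : 0 < u x := lt_of_le_of_ne (hu0 x) (Ne.symm h)
    have := mul_pos hl (mul_pos (hp x) this)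
    linarith
  set q : V → V → ℝ := fun x y => M x y * u y / (l * (totW G δ F x * u x)) with hq
  set ν : V → ℝ := fun x => totW G δ F x * u x ^ 2 with hν
  have hqsum : ∀ x, memVerts F x → ∑ y, q x y = 1 := by
    intro x hx
    simp only [hq, ← Finset.sum_div]
    rw [heig x]
    have := hu x hx
    have := hp x
    exact div_self (by positivity)
  have hqF : ∀ x y, q x y ≠ 0 → s(x, y) ∈ F := by
    intro x y hxy
    by_contra hn
    simp [hq, hMdef, hn] at hxy
  have hqnn : ∀ x y, 0 ≤ q x y := by
    intro x y
    have := hM x y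
    have := hu0 x
    have := hu0 y
    have := hp x
    simp only [hq]; positivity
  have hA : Adm G v₁ F ν q := by
    refine ⟨hF, hne, fun x => ?_, hu1, ⟨hqnn, hqsum, hqF⟩, fun x hx => ?_, fun y => ?_⟩
    · have := hp x
      simp only [hν]; positivity
    · by_contra hn
      apply hx
      simp [hν, hu' x hn]
    · have h1 : ∀ x, ν x * q x y = (u y / l) * (M y x * u x) := by
        intro x
        by_cases hx : u x = 0
        · simp [hν, hx]
        · have := (hp x).ne'
          simp only [hν, hq, hMs y x]
          field_simp
      simp only [h1, ← Finset.mul_sum]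
      rw [heig y]
      simp only [hν]
      field_simp
  have hratio : ∀ x y, s(x, y) ∈ F → q x y / phat G δ F x y = u y / (l * u x) := by
    intro x y hxy
    have := (hp x).ne'
    have := (hu x (memVerts_left hxy)).ne'
    rw [phat_eq G δ hF.1 hxy]
    simp only [hq, hMdef, hxy, if_true]
    field_simp
  refine ⟨ν, q, hA, fun x hx => ?_, fun ν' q' h' => ?_⟩
  · have := hu x hx
    have := hp x
    simp only [hν]; positivity
  · have e1 : costR G δ F ν q = - Real.log l := by
      rw [← hA.log_sum u hu hl]
      unfold costR
      refine Finset.sum_congr rfl fun x _ => ?_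
      congr 1
      refine Finset.sum_congr rfl fun y _ => ?_
      by_cases hxy : q x y = 0
      · simp [hxy]
      · rw [hratio x y (hqF x y hxy)]
    rw [e1, ← h'.log_sum u hu hl]
    unfold costR
    refine Finset.sum_le_sum fun x _ => ?_
    by_cases hx : ν' x = 0
    · simp [hx]
    have hxm := h'.supp x hx
    refine mul_le_mul_of_nonneg_left ?_ (h'.nn x)
    have hg := gibbs (q' x) (q x) (phat G δ F x) (h'.te.1 x) (hqnn x) (fun y hy => by
      have e := h'.te.2.2 x y hy
      have h3 := hu x hxm
      have h4 := hu y (memVerts_right e)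
      have h5 := hp x
      constructor
      · simp only [hq, hMdef, e, if_true]; positivity
      · rw [phat_eq G δ hF.1 e]; positivity) (by rw [hqsum x hxm, h'.te.2.1 x hxm])
    refine le_trans (le_of_eq (Finset.sum_congr rfl fun y _ => ?_)) hg
    by_cases hy : q' x y = 0
    · simp [hy]
    · rw [hratio x y (h'.te.2.2 x y hy)]

lemma exists_single (hadj : ∀ x, ∃ y, G.Adj x y) (hV : 3 ≤ Fintype.card V) (v₁ : V) :
    ∃ (F : Finset (Sym2 V)) (ν : V → ℝ) (q : V → V → ℝ), Adm G v₁ F ν q ∧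
      ∀ δ : ℝ, 0 < δ → costR G δ F ν q ≤ Fintype.card V / δ := by
  obtain ⟨y, hy⟩ := hadj v₁
  have hne : v₁ ≠ y := hy.ne
  set F : Finset (Sym2 V) := {s(v₁, y)} with hF
  set ν : V → ℝ := fun x => (if x = v₁ then 1 / 2 else 0) + (if x = y then 1 / 2 else 0) with hν
  set q : V → V → ℝ := fun a b => if s(a, b) = s(v₁, y) then 1 else 0 with hq
  have hmem : ∀ x, memVerts F x ↔ x = v₁ ∨ x = y := by
    intro x; simp [memVerts, hF]
  have hFE : F ⊆ G.edgeFinset := by simp [hF, hy]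
  have q1 : ∀ b, q v₁ b = if b = y then 1 else 0 := by
    intro b; simp [hq, hne]
  have q2 : ∀ b, q y b = if b = v₁ then 1 else 0 := by
    intro b; simp [hq, hne, hne.symm]
  have hsum : ∀ f : V → ℝ, ∑ x, ν x * f x = 1 / 2 * f v₁ + 1 / 2 * f y := by
    intro f
    simp [hν, add_mul, Finset.sum_add_distrib, ite_mul]
  have hA : Adm G v₁ F ν q := by
    refine ⟨⟨hFE, ⟨s(v₁, y), by simp [hF], by simp⟩, ?_⟩, ?_, ?_, ?_, ⟨?_, ?_, ?_⟩, ?_, ?_⟩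
    · have h1 : (SimpleGraph.fromEdgeSet (↑F : Set (Sym2 V))).Adj v₁ y := by
        simp [hF, hne]
      intro a b ha hb
      rw [hmem] at ha hb
      rcases ha with rfl | rfl <;> rcases hb with rfl | rfl
      · exact SimpleGraph.Reachable.refl _
      · exact h1.reachable
      · exact h1.symm.reachable
      · exact SimpleGraph.Reachable.refl _
    · intro hE
      have : ∃ z, z ∉ ({v₁, y} : Finset V) := by
        by_contra hn
        push Not at hn
        have h1 : (Finset.univ : Finset V) ⊆ {v₁, y} := fun z _ => hn z
        have h2 := Finset.card_le_card h1
        have h3 := Finset.card_le_two (a := v₁) (b := y)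
        rw [Finset.card_univ] at h2
        omega
      obtain ⟨z, hz⟩ := this
      obtain ⟨w, hw⟩ := hadj z
      have : s(z, w) ∈ F := by rw [hE]; simpa using hw
      have := (hmem z).1 (memVerts_left this)
      simp at hz
      tauto
    · intro x; simp only [hν]; split_ifs <;> norm_num
    · have := hsum (fun _ => 1)
      simp only [mul_one] at this
      rw [this]; norm_num
    · intro a b; simp only [hq]; split_ifs <;> norm_num
    · intro x hx
      rcases (hmem x).1 hx with rfl | rfl
      · simp [q1]
      · simp [q2]
    · intro a b hab
      by_contra hn
      apply hab
      simp only [hq]; rw [if_neg]; simpa [hF] using hn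
    · intro x hx
      rw [hmem]
      by_contra hn
      push Not at hn
      apply hx
      simp [hν, hn.1, hn.2]
    · intro b
      rw [hsum (fun x => q x b), q1, q2]
      simp only [hν]
      split_ifs <;> norm_num
  refine ⟨F, ν, q, hA, fun δ hδ => ?_⟩
  have hb : ∀ a b, s(a, b) ∈ F → Real.log (1 / phat G δ F a b) ≤ Fintype.card V / δ := by
    intro a b hab
    have hadj' : G.Adj a b := by simpa using hFE hab
    have t := totW_pos G hδ F hadj'
    rw [phat_eq G δ hFE hab, one_div_div]
    have h1 : totW G δ F a ≤ δ + Fintype.card V := by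
      unfold totW
      have h2 : ∀ z ∈ G.neighborFinset a, gw δ F s(a, z) ≤ (if z = b then δ else 0) + 1 := by
        intro z _
        unfold gw
        split_ifs with h3 h4 h4
        · linarith
        · exfalso
          apply h4
          have e1 : s(a, z) = s(v₁, y) := by simpa [hF] using h3
          have e2 : s(a, b) = s(v₁, y) := by simpa [hF] using hab
          rw [← e2] at e1
          simpa [hadj'.ne] using e1
        · linarith
        · linarith
      refine (Finset.sum_le_sum h2).trans ?_
      rw [Finset.sum_add_distrib]
      have h5 : ∑ z ∈ G.neighborFinset a, (if z = b then δ else 0) ≤ δ := by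
        rw [Finset.sum_ite_eq']; split_ifs <;> linarith
      have h6 : ∑ z ∈ G.neighborFinset a, (1 : ℝ) ≤ Fintype.card V := by
        simp only [Finset.sum_const, nsmul_eq_mul, mul_one]
        exact_mod_cast Finset.card_le_univ _
      linarith
    have h7 := Real.log_le_sub_one_of_pos (div_pos t hδ)
    have h8 : totW G δ F a / δ ≤ 1 + Fintype.card V / δ := by
      rw [div_le_iff₀ hδ, add_mul, div_mul_cancel₀ _ hδ.ne']; linarith
    linarith
  unfold costR
  rw [hsum]
  have c1 := hb v₁ y (by simp [hF])
  have c2 := hb y v₁ (by simp [hF, Sym2.eq_swap])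
  have s1 : ∑ b, q v₁ b * Real.log (q v₁ b / phat G δ F v₁ b) = Real.log (1 / phat G δ F v₁ y) := by
    rw [Finset.sum_eq_single y]
    · simp [q1]
    · intro b _ hb; simp [q1, hb]
    · simp
  have s2 : ∑ b, q y b * Real.log (q y b / phat G δ F y b) = Real.log (1 / phat G δ F y v₁) := by
    rw [Finset.sum_eq_single v₁]
    · simp [q2]
    · intro b _ hb; simp [q2, hb]
    · simp
  rw [s1, s2]
  linarith

lemma alpha_attained (hadj : ∀ x, ∃ y, G.Adj x y) (hV : 3 ≤ Fintype.card V) (v₁ : V)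
    {δ : ℝ} (hδ : 0 < δ) :
    (∃ F ν q, Adm G v₁ F ν q ∧ (∀ x, memVerts F x → 0 < ν x) ∧
      (alphaC1 G v₁ δ).toReal = costR G δ F ν q) ∧
    ∀ F ν q, Adm G v₁ F ν q → (alphaC1 G v₁ δ).toReal ≤ costR G δ F ν q := by
  have h : ∀ F : {F // F ∈ scrS G v₁ ∧ F ≠ G.edgeFinset}, ∃ (ν : V → ℝ) (q : V → V → ℝ),
      Adm G v₁ F.1 ν q ∧ (∀ x, memVerts F.1 x → 0 < ν x) ∧
      ∀ ν' q', Adm G v₁ F.1 ν' q' → costR G δ F.1 ν q ≤ costR G δ F.1 ν' q' :=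
    fun F => exists_min hadj F.2.1 F.2.2 hδ
  choose ν q hA hpos hmin using h
  obtain ⟨F0, ν0, q0, hA0, _⟩ := exists_single hadj hV v₁
  haveI : Nonempty {F // F ∈ scrS G v₁ ∧ F ≠ G.edgeFinset} := ⟨⟨F0, hA0.mem, hA0.ne⟩⟩
  obtain ⟨F, hFmin⟩ := Finite.exists_min (fun F => costR G δ F.1 (ν F) (q F))
  have hall : ∀ F' ν' q', Adm G v₁ F' ν' q' → costR G δ F.1 (ν F) (q F) ≤ costR G δ F' ν' q' :=
    fun F' ν' q' h' => (hFmin ⟨F', h'.mem, h'.ne⟩).trans (hmin ⟨F', h'.mem, h'.ne⟩ ν' q' h')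
  have heq : alphaC1 G v₁ δ = (costR G δ F.1 (ν F) (q F) : EReal) := by
    unfold alphaC1 alphaC
    apply le_antisymm
    · apply sInf_le
      have a := hA F
      exact ⟨⟨ν F, a.nn, a.sum⟩, F.1, q F, ⟨a.mem, by simpa using a.ne⟩, a.te, a.supp, a.inv,
        (relEntInt_eq G hδ a.mem.1 _ a.te).symm⟩
    · apply le_sInf
      rintro c ⟨ν', F', q', hF', hq', hs', hi', rfl⟩
      rw [relEntInt_eq G hδ hF'.1.1 _ hq']
      exact EReal.coe_le_coe_iff.2 (hall F' ν'.1 q'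
        ⟨hF'.1, by simpa using hF'.2, ν'.2.1, ν'.2.2, hq', hs', hi'⟩)
  rw [heq, EReal.toReal_coe]
  exact ⟨⟨F.1, ν F, q F, hA F, hpos F, rfl⟩, hall⟩

lemma alpha_lip (hadj : ∀ x, ∃ y, G.Adj x y) (hV : 3 ≤ Fintype.card V) (v₁ : V)
    {δ₀ δ δ' : ℝ} (h0 : 0 < δ₀) (hδ : δ₀ ≤ δ) (hle : δ ≤ δ') :
    |(alphaC1 G v₁ δ).toReal - (alphaC1 G v₁ δ').toReal| ≤ δ₀⁻¹ * |δ - δ'| := by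
  have hp : 0 < δ := h0.trans_le hδ
  have hp' : 0 < δ' := hp.trans_le hle
  obtain ⟨⟨F, ν, q, hA, -, he⟩, hm⟩ := alpha_attained hadj hV v₁ hp
  obtain ⟨⟨F', ν', q', hA', -, he'⟩, hm'⟩ := alpha_attained hadj hV v₁ hp'
  have h1 := hm' F ν q hA
  have h2 := hA.cost_anti hp hle
  have h3 := hm F' ν' q' hA'
  have h4 := hA'.cost_lip hp hle
  have h5 : Real.log δ' - Real.log δ ≤ δ₀⁻¹ * (δ' - δ) := by
    rw [← Real.log_div hp'.ne' hp.ne']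
    refine (Real.log_le_sub_one_of_pos (div_pos hp' hp)).trans ?_
    have : δ' / δ - 1 = δ⁻¹ * (δ' - δ) := by field_simp
    rw [this]
    have : δ⁻¹ ≤ δ₀⁻¹ := by gcongr
    exact mul_le_mul_of_nonneg_right this (by linarith)
  rw [abs_of_nonneg (by linarith), abs_of_nonpos (by linarith)]
  linarith

end Proof

/-- `δ ↦ α_c^1(δ)` is continuous and strictly decreasing on `(0, ∞)`,
uniformly continuous on `[δ₀, ∞)` for every `δ₀ > 0`, and tends to `0` at `∞`. -/
theorem orrw_cover_exponent_regularity {V : Type} [Fintype V] [DecidableEq V]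
    (G : SimpleGraph V) [DecidableRel G.Adj] (hG : G.Connected)
    (hV : 3 ≤ Fintype.card V) (v₁ : V) :
    StrictAntiOn (fun d : ℝ => (alphaC1 G v₁ d).toReal) (Set.Ioi 0) ∧
    ContinuousOn (fun d : ℝ => (alphaC1 G v₁ d).toReal) (Set.Ioi 0) ∧
    (∀ δ₀ : ℝ, 0 < δ₀ →
      UniformContinuousOn (fun d : ℝ => (alphaC1 G v₁ d).toReal) (Set.Ici δ₀)) ∧
    Tendsto (fun d : ℝ => (alphaC1 G v₁ d).toReal) atTop (nhds 0) := by
  haveI : Nontrivial V := Fintype.one_lt_card_iff_nontrivial.1 (by omega)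
  have hadj : ∀ x, ∃ y, G.Adj x y := fun x => hG.preconnected.exists_adj_of_nontrivial x
  have huc : ∀ δ₀ : ℝ, 0 < δ₀ →
      UniformContinuousOn (fun d : ℝ => (alphaC1 G v₁ d).toReal) (Set.Ici δ₀) := by
    intro δ₀ h0
    refine LipschitzOnWith.uniformContinuousOn (K := Real.toNNReal δ₀⁻¹)
      (LipschitzOnWith.of_dist_le_mul fun x hx y hy => ?_)
    rw [Real.coe_toNNReal _ (by positivity), Real.dist_eq, Real.dist_eq]
    rcases le_total x y with h | h
    · exact alpha_lip hadj hV v₁ h0 hx h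
    · rw [abs_sub_comm, abs_sub_comm x y]
      exact alpha_lip hadj hV v₁ h0 hy h
  refine ⟨?_, ?_, huc, ?_⟩
  · intro a ha b hb hab
    obtain ⟨⟨F, ν, q, hA, hpos, he⟩, -⟩ := alpha_attained hadj hV v₁ ha
    obtain ⟨-, hm⟩ := alpha_attained hadj hV v₁ hb
    have h1 := hm F ν q hA
    have h2 := hA.cost_strict hG hpos ha hab
    show (alphaC1 G v₁ b).toReal < (alphaC1 G v₁ a).toReal
    linarith
  · intro x hx
    have hx' : 0 < x := hx
    have h1 := (huc (x / 2) (by positivity)).continuousOn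
    exact (h1.continuousAt (Ici_mem_nhds (by linarith))).continuousWithinAt
  · obtain ⟨F, ν, q, hA, hle⟩ := exists_single hadj hV v₁
    have ht : Tendsto (fun d : ℝ => (Fintype.card V : ℝ) / d) atTop (nhds 0) :=
      tendsto_const_nhds.div_atTop tendsto_id
    refine tendsto_of_tendsto_of_tendsto_of_le_of_le' tendsto_const_nhds ht ?_ ?_
    · filter_upwards [eventually_gt_atTop 0] with d hd
      obtain ⟨⟨F, ν, q, hA, -, he⟩, -⟩ := alpha_attained hadj hV v₁ hd
      rw [he]; exact hA.cost_nonneg hd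
    · filter_upwards [eventually_gt_atTop 0] with d hd
      exact ((alpha_attained hadj hV v₁ hd).2 F ν q hA).trans (hle d hd)

end ORRW
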